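/- The relation ≤₂ respects the relation ≤₁: for all ordinals α, β, γ, if α ≤₁ β ≤₁ γ and α ≤₂ γ, then α ≤₂ β. -/

import Mathlib

open FirstOrder

/-- The relation symbols of the language of `ℛ₂`: three binary relations. -/
inductive ordRel : ℕ → Type
  | le : ordRel 2
  | le1 : ordRel 2
  | le2 : ordRel 2

/-- The first-order language with three binary relation symbols `≤`, `≤₁`, `≤₂`. -/
def ordLang : FirstOrder.Language := ⟨fun _ => Empty, ordRel⟩

/-- The `ordLang`-structure on the set of ordinals below `β`, interpreting the three
relation symbols by `≤` and the given relations `le1`, `le2`. -/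
def segStr (le1 le2 : Ordinal → Ordinal → Prop) (β : Ordinal) :
    ordLang.Structure {x : Ordinal // x < β} where
  funMap := fun f => Empty.elim f
  RelMap
    | .le => fun v => (v 0).1 ≤ (v 1).1
    | .le1 => fun v => le1 (v 0).1 (v 1).1
    | .le2 => fun v => le2 (v 0).1 (v 1).1

/-- Σ₁-formulas: a block of existential quantifiers applied to a quantifier-free formula. -/
inductive IsSigma1 {L : FirstOrder.Language} {α : Type} :
    {n : ℕ} → L.BoundedFormula α n → Prop
  | of_isQF {n} {φ : L.BoundedFormula α n} (h : φ.IsQF) : IsSigma1 φ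
  | ex {n} {φ : L.BoundedFormula α (n + 1)} (h : IsSigma1 φ) : IsSigma1 φ.ex

/-- Π₁-formulas: a block of universal quantifiers applied to a quantifier-free formula. -/
inductive IsPi1 {L : FirstOrder.Language} {α : Type} :
    {n : ℕ} → L.BoundedFormula α n → Prop
  | of_isQF {n} {φ : L.BoundedFormula α n} (h : φ.IsQF) : IsPi1 φ
  | all {n} {φ : L.BoundedFormula α (n + 1)} (h : IsPi1 φ) : IsPi1 φ.all

/-- Σ₂-formulas: a block of existential quantifiers applied to a Π₁-formula. -/
inductive IsSigma2 {L : FirstOrder.Language} {α : Type} :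
    {n : ℕ} → L.BoundedFormula α n → Prop
  | of_isPi1 {n} {φ : L.BoundedFormula α n} (h : IsPi1 φ) : IsSigma2 φ
  | ex {n} {φ : L.BoundedFormula α (n + 1)} (h : IsSigma2 φ) : IsSigma2 φ.ex

/-- Realization of a formula with `k` parameters in the segment structure below `β`. -/
def RealizeIn (le1 le2 : Ordinal → Ordinal → Prop) (β : Ordinal) {k : ℕ}
    (φ : ordLang.Formula (Fin k)) (v : Fin k → {x : Ordinal // x < β}) : Prop :=
  letI := segStr le1 le2 β
  φ.Realize v

/-- `a ≤ b` and the segment below `a` is an elementary substructure of the segment below `b`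
with respect to the class `C` of formulas (with parameters from below `a`). -/
def ElemSub (C : ∀ k : ℕ, ordLang.Formula (Fin k) → Prop)
    (le1 le2 : Ordinal → Ordinal → Prop) (a b : Ordinal) : Prop :=
  ∃ hab : a ≤ b,
    ∀ (k : ℕ) (φ : ordLang.Formula (Fin k)), C k φ →
      ∀ v : Fin k → {x : Ordinal // x < a},
        RealizeIn le1 le2 a φ v ↔
          RealizeIn le1 le2 b φ (fun j => ⟨(v j).1, lt_of_lt_of_le (v j).2 hab⟩)

/-- The pair of relations `le1`, `le2` satisfies the simultaneous recursive definition of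
`≤₁` and `≤₂` on the ordinals: `α ≤ᵢ β` iff `α ≤ β` and the segment below `α` is a
Σᵢ-elementary substructure of the segment below `β`. -/
def IsR2Pair (le1 le2 : Ordinal → Ordinal → Prop) : Prop :=
  (∀ a b, le1 a b ↔ ElemSub (fun _ φ => IsSigma1 φ) le1 le2 a b) ∧
  (∀ a b, le2 a b ↔ ElemSub (fun _ φ => IsSigma2 φ) le1 le2 a b)

/-- The strict part of `≤₁`. -/
def Lt1 (le1 : Ordinal → Ordinal → Prop) (a b : Ordinal) : Prop := le1 a b ∧ a ≠ b

/-- The strict part of `≤₂`. -/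
def Lt2 (le2 : Ordinal → Ordinal → Prop) (a b : Ordinal) : Prop := le2 a b ∧ a ≠ b

/-- `1^∞`: the least ordinal `ν` such that below `ν` there are `<₂`-chains of every finite
length. -/
noncomputable def OneInfty (le2 : Ordinal → Ordinal → Prop) : Ordinal :=
  sInf {ν : Ordinal | ∀ n : ℕ, ∃ β : Fin n → Ordinal,
    (∀ i, β i < ν) ∧
    ∀ (i : ℕ) (hi : i + 1 < n), Lt2 le2 (β ⟨i, Nat.lt_of_succ_lt hi⟩) (β ⟨i + 1, hi⟩)}

/-- A respecting forest of order 2: a finite structure with a linear order `≤₀` and partial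
orders `≤₁`, `≤₂` which are forests, with `≤₂ ⊆ ≤₁ ⊆ ≤₀`, and `≤ᵢ₊₁` respecting `≤ᵢ`. -/
structure RForest where
  P : Type
  [fintypeP : Fintype P]
  le0 : P → P → Prop
  le1 : P → P → Prop
  le2 : P → P → Prop
  le0_refl : ∀ p, le0 p p
  le0_trans : ∀ p q r, le0 p q → le0 q r → le0 p r
  le0_antisymm : ∀ p q, le0 p q → le0 q p → p = q
  le0_total : ∀ p q, le0 p q ∨ le0 q p
  le1_refl : ∀ p, le1 p p
  le1_trans : ∀ p q r, le1 p q → le1 q r → le1 p r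
  le1_antisymm : ∀ p q, le1 p q → le1 q p → p = q
  le2_refl : ∀ p, le2 p p
  le2_trans : ∀ p q r, le2 p q → le2 q r → le2 p r
  le2_antisymm : ∀ p q, le2 p q → le2 q p → p = q
  le2_sub_le1 : ∀ p q, le2 p q → le1 p q
  le1_sub_le0 : ∀ p q, le1 p q → le0 p q
  forest1 : ∀ p q r, le1 q p → le1 r p → le1 q r ∨ le1 r q
  forest2 : ∀ p q r, le2 q p → le2 r p → le2 q r ∨ le2 r q
  respects1 : ∀ p q r, le0 p q → le0 q r → le1 p r → le1 p q
  respects2 : ∀ p q r, le1 p q → le1 q r → le2 p r → le2 p q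

attribute [instance] RForest.fintypeP

/-- The finite set `X` of ordinals, with the relations induced from `ℛ₂`, is isomorphic to the
respecting forest `F`. -/
def Realizes (le1 le2 : Ordinal → Ordinal → Prop) (F : RForest) (X : Finset Ordinal) : Prop :=
  ∃ e : F.P ≃ {x // x ∈ X}, ∀ p q : F.P,
    (F.le0 p q ↔ ((e p : Ordinal) ≤ (e q : Ordinal))) ∧
    (F.le1 p q ↔ le1 (e p : Ordinal) (e q : Ordinal)) ∧
    (F.le2 p q ↔ le2 (e p : Ordinal) (e q : Ordinal))

/-- Pointwise comparison of two finite sets of ordinals via their increasing enumerations. -/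
def pwLE (X Y : Finset Ordinal) : Prop :=
  ∃ h : X.card = Y.card, ∀ i : Fin X.card,
    ((X.orderIsoOfFin rfl i : {x // x ∈ X}) : Ordinal) ≤
      ((Y.orderIsoOfFin h.symm i : {x // x ∈ Y}) : Ordinal)

/-- `X` is the isominimal realization of the respecting forest `F` in `ℛ₂`: it is isomorphic
to `F` and pointwise minimal among all finite substructures of `ℛ₂` isomorphic to `F`. -/
def IsIsominimalRealization (le1 le2 : Ordinal → Ordinal → Prop) (F : RForest)
    (X : Finset Ordinal) : Prop :=
  Realizes le1 le2 F X ∧ ∀ Y : Finset Ordinal, Realizes le1 le2 F Y → pwLE X Y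

/-- A covering of the respecting forest `F` into `ℛ₂`. -/
def IsCovering (le1 le2 : Ordinal → Ordinal → Prop) (F : RForest)
    (c : F.P → Ordinal) : Prop :=
  (∀ p q, F.le0 p q ↔ c p ≤ c q) ∧
  (∀ p q, F.le1 p q → le1 (c p) (c q)) ∧
  (∀ p q, F.le2 p q → le2 (c p) (c q))


/-- A covering of the respecting forest `F` into the respecting forest `G`. -/
def ForestCovering (F G : RForest) (f : F.P → G.P) : Prop :=
  (∀ p q, F.le0 p q ↔ G.le0 (f p) (f q)) ∧
  (∀ p q, F.le1 p q → G.le1 (f p) (f q)) ∧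
  (∀ p q, F.le2 p q → G.le2 (f p) (f q))

/-!
A `Σ₂`-formula is preserved upwards along any `Σ₁`-elementary map. Hence, if `g` is
`Σ₁`-elementary and `g ∘ f` is `Σ₂`-elementary, a `Σ₂`-formula true in the codomain of `f` is
pushed up along `g` and pulled back along `g ∘ f`. The other direction is preservation along `f`,
which is `Σ₁`-elementary because both `g` and `g ∘ f` are.
-/

section Formulas

open FirstOrder.Language

variable {L : FirstOrder.Language} {α : Type} {n : ℕ} {φ : L.BoundedFormula α n}

theorem IsSigma1.isSigma2 (h : IsSigma1 φ) : IsSigma2 φ := by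
  induction h with
  | of_isQF h => exact .of_isPi1 (.of_isQF h)
  | ex _ ih => exact ih.ex

theorem IsSigma1.relabel {β : Type} {m : ℕ} (h : IsSigma1 φ) (g : α → β ⊕ Fin m) :
    IsSigma1 (φ.relabel g) := by
  induction h with
  | of_isQF h => exact .of_isQF (h.relabel g)
  | ex _ ih =>
    rw [BoundedFormula.relabel_ex]
    exact ih.ex

theorem isQF_toFormula (h : φ.IsQF) : φ.toFormula.IsQF := by
  induction h with
  | falsum => exact .falsum
  | of_isAtomic h =>
    cases h with
    | equal t₁ t₂ => exact (BoundedFormula.IsAtomic.equal _ _).isQF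
    | rel R ts => exact (BoundedFormula.IsAtomic.rel R _).isQF
  | imp _ _ ih₁ ih₂ => exact ih₁.imp ih₂

theorem IsSigma1.toFormula (h : IsSigma1 φ) : IsSigma1 φ.toFormula := by
  induction h with
  | of_isQF h => exact .of_isQF (isQF_toFormula h)
  | ex _ ih => exact (ih.relabel _).ex

/-- The negation of `φ`, pushed through the leading block of universal quantifiers of `φ`, so that
it turns `Π₁`-formulas into `Σ₁`-formulas. -/
def pushNot : ∀ {n : ℕ}, L.BoundedFormula α n → L.BoundedFormula α n
  | _, .all φ => (pushNot φ).ex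
  | _, φ => φ.not

theorem IsPi1.isSigma1_pushNot (h : IsPi1 φ) : IsSigma1 (pushNot φ) := by
  induction h with
  | of_isQF h => cases h with
    | falsum => exact .of_isQF BoundedFormula.IsQF.falsum.not
    | of_isAtomic h => cases h with
      | equal t₁ t₂ => exact .of_isQF (BoundedFormula.IsAtomic.equal t₁ t₂).isQF.not
      | rel R ts => exact .of_isQF (BoundedFormula.IsAtomic.rel R ts).isQF.not
    | imp h₁ h₂ => exact .of_isQF (h₁.imp h₂).not
  | all _ ih => exact ih.ex

theorem realize_pushNot {M : Type*} [L.Structure M] {v : α → M} {xs : Fin n → M} :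
    (pushNot φ).Realize v xs ↔ ¬ φ.Realize v xs := by
  induction φ with
  | all φ ih => simp only [pushNot, BoundedFormula.realize_ex, BoundedFormula.realize_all, ih,
      not_forall]
  | _ => exact BoundedFormula.realize_not

end Formulas

/-- A map `f` is elementary for the class `C` of formulas if it preserves and reflects the truth of
every formula in `C`. As in `ElemSub`, which is the case of an inclusion of segments, the
parameters are indexed by `Fin k`. -/
def IsElementaryFor {L : FirstOrder.Language} {M N : Type*} [L.Structure M] [L.Structure N]
    (C : ∀ k : ℕ, L.Formula (Fin k) → Prop) (f : M → N) : Prop :=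
  ∀ (k : ℕ) (φ : L.Formula (Fin k)), C k φ → ∀ v : Fin k → M, φ.Realize v ↔ φ.Realize (f ∘ v)

namespace IsElementaryFor

open FirstOrder.Language

variable {L : FirstOrder.Language} {M N K : Type*} [L.Structure M] [L.Structure N] [L.Structure K]
  {C C' : ∀ k : ℕ, L.Formula (Fin k) → Prop} {f : M → N} {g : N → K}
  {k n : ℕ} {φ : L.BoundedFormula (Fin k) n}

theorem mono (hf : IsElementaryFor C' f) (hC : ∀ k φ, C k φ → C' k φ) : IsElementaryFor C f :=
  fun k φ hφ => hf k φ (hC k φ hφ)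

theorem of_comp (hg : IsElementaryFor C g) (hgf : IsElementaryFor C (g ∘ f)) :
    IsElementaryFor C f :=
  fun k φ hφ v => (hgf k φ hφ v).trans (hg k φ hφ (f ∘ v)).symm

theorem realize_iff_of_isSigma1 (hf : IsElementaryFor (L := L) (fun _ φ => IsSigma1 φ) f)
    (hφ : IsSigma1 φ) (v : Fin k → M) (xs : Fin n → M) :
    φ.Realize v xs ↔ φ.Realize (f ∘ v) (f ∘ xs) := by
  have h := hf (k + n) (φ.toFormula.relabel finSumFinEquiv) (hφ.toFormula.relabel _)
    (Sum.elim v xs ∘ finSumFinEquiv.symm)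
  simpa only [Formula.realize_relabel, BoundedFormula.realize_toFormula, Function.comp_assoc,
    Equiv.symm_comp_self, Function.comp_id, Sum.elim_comp_inl, Sum.elim_comp_inr] using h

theorem realize_iff_of_isPi1 (hf : IsElementaryFor (L := L) (fun _ φ => IsSigma1 φ) f)
    (hφ : IsPi1 φ) (v : Fin k → M) (xs : Fin n → M) :
    φ.Realize v xs ↔ φ.Realize (f ∘ v) (f ∘ xs) := by
  have h := hf.realize_iff_of_isSigma1 hφ.isSigma1_pushNot v xs
  rwa [realize_pushNot, realize_pushNot, not_iff_not] at h

theorem realize_comp_of_isSigma2 (hf : IsElementaryFor (L := L) (fun _ φ => IsSigma1 φ) f)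
    (hφ : IsSigma2 φ) (v : Fin k → M) {xs : Fin n → M} (h : φ.Realize v xs) :
    φ.Realize (f ∘ v) (f ∘ xs) := by
  induction hφ with
  | of_isPi1 hφ => exact (hf.realize_iff_of_isPi1 hφ v xs).1 h
  | ex _ ih =>
    obtain ⟨x, hx⟩ := BoundedFormula.realize_ex.1 h
    refine BoundedFormula.realize_ex.2 ⟨f x, ?_⟩
    rw [← Fin.comp_snoc]
    exact ih hx

theorem realize_comp_of_isSigma2_formula
    (hf : IsElementaryFor (L := L) (fun _ φ => IsSigma1 φ) f) {φ : L.Formula (Fin k)}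
    (hφ : IsSigma2 φ) {v : Fin k → M} (h : φ.Realize v) : φ.Realize (f ∘ v) := by
  have h' := hf.realize_comp_of_isSigma2 hφ v h
  rwa [Subsingleton.elim (f ∘ default) default] at h'

theorem sigma2_of_comp (hg : IsElementaryFor (L := L) (fun _ φ => IsSigma1 φ) g)
    (hgf : IsElementaryFor (L := L) (fun _ φ => IsSigma2 φ) (g ∘ f)) :
    IsElementaryFor (L := L) (fun _ φ => IsSigma2 φ) f := by
  have hf : IsElementaryFor (L := L) (fun _ φ => IsSigma1 φ) f :=
    hg.of_comp (hgf.mono fun _ _ hφ => hφ.isSigma2)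
  intro k φ hφ v
  exact ⟨hf.realize_comp_of_isSigma2_formula hφ,
    fun h => (hgf k φ hφ v).2 (hg.realize_comp_of_isSigma2_formula hφ h)⟩

end IsElementaryFor

/-- The inclusion of the segment below `a` in the segment below `b`, the map underlying
`ElemSub`. -/
def segInclusion {a b : Ordinal} (hab : a ≤ b) (x : {x : Ordinal // x < a}) :
    {x : Ordinal // x < b} :=
  ⟨x.1, x.2.trans_le hab⟩

theorem elemSub_iff_isElementaryFor {C : ∀ k : ℕ, ordLang.Formula (Fin k) → Prop}
    {le1 le2 : Ordinal → Ordinal → Prop} {a b : Ordinal} :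
    ElemSub C le1 le2 a b ↔ ∃ hab : a ≤ b,
      letI := segStr le1 le2
      IsElementaryFor C (segInclusion hab) :=
  Iff.rfl

theorem ElemSub.sigma2_of_le {le1 le2 : Ordinal → Ordinal → Prop} {a b c : Ordinal} (hab : a ≤ b)
    (hbc : ElemSub (fun _ φ => IsSigma1 φ) le1 le2 b c)
    (hac : ElemSub (fun _ φ => IsSigma2 φ) le1 le2 a c) :
    ElemSub (fun _ φ => IsSigma2 φ) le1 le2 a b := by
  let := segStr le1 le2
  obtain ⟨_, hg⟩ := elemSub_iff_isElementaryFor.1 hbc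
  obtain ⟨_, hgf⟩ := elemSub_iff_isElementaryFor.1 hac
  exact elemSub_iff_isElementaryFor.2 ⟨hab, hg.sigma2_of_comp hgf⟩

theorem stmt6_general {le1 le2 : Ordinal → Ordinal → Prop} (h : IsR2Pair le1 le2)
    {α β γ : Ordinal} (hαβ : α ≤ β) (hβγ : le1 β γ) (hαγ : le2 α γ) : le2 α β :=
  (h.2 α β).2 (ElemSub.sigma2_of_le hαβ ((h.1 β γ).1 hβγ) ((h.2 α γ).1 hαγ))

theorem stmt6 (le1 le2 : Ordinal → Ordinal → Prop) (h : IsR2Pair le1 le2) :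
    ∀ α β γ : Ordinal, le1 α β → le1 β γ → le2 α γ → le2 α β := by
  intro α β γ hαβ hβγ hαγ
  exact stmt6_general h ((h.1 α β).1 hαβ).1 hβγ hαγ
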